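/- The sequence of real numbers {r_n} satisfies the difference equation n(n+1)^5 b0(n−1) r_{n+1} − 2n b1(n) r_n − b2(n) r_{n−1} + 2(n−1)^5 (2n−1) b0(n) r_{n−2} = 0 for every integer n ≥ 2. -/

import Mathlib

noncomputable section

open Filter


def a0r (x : ℝ) : ℝ := 41218*x^3 - 48459*x^2 + 20010*x - 2871

def a1r (x : ℝ) : ℝ := 2*(48802112*x^9 + 89030880*x^8 + 36002654*x^7 - 24317344*x^6
  - 19538418*x^5 + 1311365*x^4 + 3790503*x^3 + 460056*x^2 - 271701*x - 60291)

def a2r (x : ℝ) : ℝ := 3874492*x^8 - 2617900*x^7 - 3144314*x^6 + 2947148*x^5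
  + 647130*x^4 - 1182926*x^3 + 115771*x^2 + 170716*x - 44541

def b0r (x : ℝ) : ℝ := -a0r (-x)
def b1r (x : ℝ) : ℝ := a2r (-x)
def b2r (x : ℝ) : ℝ := -a1r (-x)

/-- The very-well-poised hypergeometric series `r_n`
(the summation index `k ≥ 1` is written as `k + 1` with `k : ℕ`). -/
def rr (n : ℕ) : ℝ := (Nat.factorial n : ℝ)^4 * ∑' k : ℕ,
  (((k : ℝ) + 1) + (n : ℝ)/2)
    * (∏ j ∈ Finset.Icc 1 n, (((k : ℝ) + 1) - (j : ℝ)))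
    * (∏ j ∈ Finset.Icc 1 n, (((k : ℝ) + 1) + (n : ℝ) + (j : ℝ)))
    / (∏ j ∈ Finset.range (n+1), (((k : ℝ) + 1) + (j : ℝ))^6)

/-!
Creative telescoping. Each `r_n` is a series `∑_{k ≥ 1} R_n(k)` whose summand `R_n(t)` is
hypergeometric in both `n` and `t`, so every shift of it is a rational multiple of `R_{n-2}(t)`.
Zeilberger's algorithm supplies a rational multiple `S_n(t)` of the summand for which the operator
of the recurrence, applied to `R_n(t)`, equals `S_n(t + 1) - S_n(t)`; after division by the common
hypergeometric factor this is an identity between polynomials. Summing over `t = 1, 2, …` leaves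
`lim S_n - S_n(1)`, and both vanish: `S_n(t)` contains the factor `t - 1`, and by degree counting
it decays like `1 / t`.
-/

open Asymptotics Polynomial Topology

section Pochhammer

variable {R : Type*}

lemma ascPochhammer_eval_eq_prod_range [CommSemiring R] (n : ℕ) (r : R) :
    (ascPochhammer R n).eval r = ∏ j ∈ Finset.range n, (r + j) := by
  induction n with
  | zero => simp
  | succ n ih => rw [ascPochhammer_succ_eval, ih, Finset.prod_range_succ]

lemma prod_Icc_add_eq_ascPochhammer_eval [CommSemiring R] (n : ℕ) (r : R) :
    ∏ j ∈ Finset.Icc 1 n, (r + j) = (ascPochhammer R n).eval (r + 1) := by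
  induction n with
  | zero => simp
  | succ n ih =>
    rw [Finset.prod_Icc_succ_top (by lia), ih, ascPochhammer_succ_eval]
    push_cast
    ring

lemma prod_Icc_sub_eq_descPochhammer_eval [CommRing R] (n : ℕ) (r : R) :
    ∏ j ∈ Finset.Icc 1 n, (r - j) = (descPochhammer R n).eval (r - 1) := by
  induction n with
  | zero => simp
  | succ n ih =>
    rw [Finset.prod_Icc_succ_top (by lia), ih, descPochhammer_succ_eval]
    push_cast
    ring

lemma mul_ascPochhammer_eval_add_one [CommSemiring R] (n : ℕ) (r : R) :
    r * (ascPochhammer R n).eval (r + 1) = (ascPochhammer R n).eval r * (r + n) := by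
  rw [← ascPochhammer_succ_eval, ascPochhammer_succ_left]
  simp

lemma descPochhammer_succ_eval_left [CommRing R] (n : ℕ) (r : R) :
    (descPochhammer R (n + 1)).eval r = r * (descPochhammer R n).eval (r - 1) := by
  simp [descPochhammer_succ_left]

end Pochhammer

section Asymptotics

lemma isBigO_zpow_atTop {a b : ℤ} (h : a ≤ b) :
    (fun t : ℝ ↦ t ^ a) =O[atTop] fun t : ℝ ↦ t ^ b := by
  refine IsBigO.of_bound 1 ?_
  filter_upwards [eventually_ge_atTop 1] with t ht
  have ht₀ : 0 ≤ t := zero_le_one.trans ht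
  rw [one_mul, Real.norm_of_nonneg (zpow_nonneg ht₀ a), Real.norm_of_nonneg (zpow_nonneg ht₀ b)]
  exact zpow_le_zpow_right₀ ht h

lemma isBigO_eval_div_eval (P Q : ℝ[X]) :
    (fun t ↦ P.eval t / Q.eval t) =O[atTop]
      fun t ↦ t ^ ((P.natDegree : ℤ) - (Q.natDegree : ℤ)) :=
  (P.isEquivalent_atTop_div Q).isBigO.trans (isBigO_const_mul_self _ _ _)

lemma hasSum_sub_of_tendsto {G : Type*} [AddCommGroup G] [TopologicalSpace G]
    [IsTopologicalAddGroup G] [T2Space G] {f : ℕ → G} {l : G}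
    (hf : Summable fun k ↦ f (k + 1) - f k) (hl : Tendsto f atTop (𝓝 l)) :
    HasSum (fun k ↦ f (k + 1) - f k) (l - f 0) := by
  rw [hf.hasSum_iff_tendsto_nat]
  simpa only [Finset.sum_range_sub] using hl.sub_const (f 0)

end Asymptotics

/-- The summand of `rr n` without its linear factor `t + n / 2`, at a real argument `t` and with
the normalisation `n!⁴` included; the Pochhammer polynomials give access to its shifts in `n` and
`t` and to its growth. -/
def rrTerm (n : ℕ) (t : ℝ) : ℝ :=
  (n.factorial : ℝ) ^ 4 * (descPochhammer ℝ n).eval (t - 1) *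
    (ascPochhammer ℝ n).eval (t + n + 1) / (ascPochhammer ℝ (n + 1)).eval t ^ 6

/-- The normalised rational function `R_n(t)` for which `r_n = ∑_{k ≥ 1} R_n(k)`. -/
def rrSummand (n : ℕ) (t : ℝ) : ℝ := (t + n / 2) * rrTerm n t

lemma rr_eq_tsum_rrSummand (n : ℕ) : rr n = ∑' k : ℕ, rrSummand n (k + 1) := by
  rw [rr, ← tsum_mul_left]
  refine tsum_congr fun k ↦ ?_
  rw [prod_Icc_sub_eq_descPochhammer_eval, prod_Icc_add_eq_ascPochhammer_eval, Finset.prod_pow,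
    ← ascPochhammer_eval_eq_prod_range, rrSummand, rrTerm]
  ring

section Shifts

variable (n : ℕ) {t : ℝ}

lemma rrTerm_succ (ht : 0 < t) :
    (t + n + 1) ^ 7 * rrTerm (n + 1) t =
      (n + 1) ^ 4 * (t - (n + 1)) * (t + 2 * n + 1) * (t + 2 * n + 2) * rrTerm n t := by
  have hD : (ascPochhammer ℝ (n + 1)).eval t ≠ 0 := (ascPochhammer_pos _ t ht).ne'
  have hdesc : (descPochhammer ℝ (n + 1)).eval (t - 1) =
      (descPochhammer ℝ n).eval (t - 1) * (t - (n + 1)) := by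
    rw [descPochhammer_succ_eval]
    ring
  have hasc : (ascPochhammer ℝ (n + 1)).eval (t + (n + 1) + 1) =
      (ascPochhammer ℝ n).eval (t + n + 1) * (t + 2 * n + 1) * (t + 2 * n + 2) / (t + n + 1) := by
    rw [eq_div_iff (by positivity), mul_comm, ← add_assoc t, mul_ascPochhammer_eval_add_one,
      ascPochhammer_succ_eval]
    push_cast
    ring
  have hden : (ascPochhammer ℝ (n + 1 + 1)).eval t =
      (ascPochhammer ℝ (n + 1)).eval t * (t + n + 1) := by
    rw [ascPochhammer_succ_eval, Nat.cast_add_one, add_assoc]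
  rw [rrTerm, rrTerm, Nat.factorial_succ]
  push_cast
  rw [hdesc, hasc, hden]
  field_simp

lemma rrTerm_succ_add_one (ht : 0 < t) :
    ((t + n + 1) * (t + n + 2)) ^ 7 * rrTerm (n + 1) (t + 1) =
      (n + 1) ^ 4 * t ^ 7 * (t + 2 * n + 1) * (t + 2 * n + 2) * (t + 2 * n + 3) * rrTerm n t := by
  have hD : (ascPochhammer ℝ (n + 1)).eval t ≠ 0 := (ascPochhammer_pos _ t ht).ne'
  have hdesc : (descPochhammer ℝ (n + 1)).eval (t + 1 - 1) =
      t * (descPochhammer ℝ n).eval (t - 1) := by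
    rw [add_sub_cancel_right, descPochhammer_succ_eval_left]
  have hasc : (ascPochhammer ℝ (n + 1)).eval (t + 1 + (n + 1) + 1) =
      (ascPochhammer ℝ n).eval (t + n + 1) *
        ((t + 2 * n + 1) * (t + 2 * n + 2) * (t + 2 * n + 3)) /
          ((t + n + 1) * (t + n + 2)) := by
    have h₁ := mul_ascPochhammer_eval_add_one (n + 1) (t + n + 1)
    have h₂ := mul_ascPochhammer_eval_add_one (n + 1) (t + n + 1 + 1)
    rw [ascPochhammer_succ_eval n (t + n + 1)] at h₁
    rw [show t + 1 + (n + 1) + 1 = t + n + 1 + 1 + 1 by ring, eq_div_iff (by positivity)]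
    push_cast at h₁ h₂
    linear_combination (t + n + 1) * h₂ + (t + 2 * n + 3) * h₁
  have hden : (ascPochhammer ℝ (n + 1 + 1)).eval (t + 1) =
      (ascPochhammer ℝ (n + 1)).eval t * ((t + n + 1) * (t + n + 2)) / t := by
    rw [eq_div_iff ht.ne', mul_comm, mul_ascPochhammer_eval_add_one,
      ascPochhammer_succ_eval (n + 1)]
    push_cast
    ring
  rw [rrTerm, rrTerm, Nat.factorial_succ]
  push_cast
  rw [hdesc, hasc, hden]
  field_simp

end Shifts

lemma isBigO_rrTerm (n : ℕ) : rrTerm n =O[atTop] fun t ↦ t ^ (-(4 * n + 6) : ℤ) := by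
  let P : ℝ[X] := C ((n.factorial : ℝ) ^ 4) * (descPochhammer ℝ n).comp (X - C 1) *
    (ascPochhammer ℝ n).comp (X + C ((n : ℝ) + 1))
  let Q : ℝ[X] := ascPochhammer ℝ (n + 1) ^ 6
  have hPQ : rrTerm n = fun t ↦ P.eval t / Q.eval t := by
    ext t
    simp [P, Q, rrTerm, add_assoc]
  have hP : P.natDegree = 2 * n := by
    have hdesc : ((descPochhammer ℝ n).comp (X - C 1)).Monic :=
      (monic_descPochhammer ℝ n).comp (monic_X_sub_C 1) (by simp [-map_one])
    have hasc : ((ascPochhammer ℝ n).comp (X + C ((n : ℝ) + 1))).Monic :=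
      (monic_ascPochhammer ℝ n).comp (monic_X_add_C _) (by simp [-map_add])
    have hfac : (n.factorial : ℝ) ^ 4 ≠ 0 := by positivity
    simp only [P, mul_assoc, natDegree_C_mul hfac, hdesc.natDegree_mul hasc, natDegree_comp,
      natDegree_X_sub_C, natDegree_X_add_C, descPochhammer_natDegree, ascPochhammer_natDegree]
    ring
  have hQ : Q.natDegree = 6 * (n + 1) := by
    rw [natDegree_pow, ascPochhammer_natDegree]
  rw [hPQ]
  convert isBigO_eval_div_eval P Q using 3
  rw [hP, hQ]
  push_cast
  ring

lemma isBigO_div_mul_rrTerm (P Q : ℝ[X]) (n : ℕ) {d : ℤ}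
    (hd : (P.natDegree : ℤ) - Q.natDegree - (4 * n + 6) ≤ d) :
    (fun t ↦ P.eval t / Q.eval t * rrTerm n t) =O[atTop] fun t ↦ t ^ d := by
  refine ((isBigO_eval_div_eval P Q).mul (isBigO_rrTerm n)).trans
    (IsBigO.trans (EventuallyEq.isBigO ?_) (isBigO_zpow_atTop hd))
  filter_upwards [eventually_ne_atTop 0] with t ht
  rw [← zpow_add₀ ht, ← sub_eq_add_neg]

lemma summable_rrSummand (n : ℕ) : Summable fun k : ℕ ↦ rrSummand n (k + 1) := by
  have hO : (fun t ↦ (t + n / 2) * rrTerm n t) =O[atTop] fun t ↦ t ^ (-2 : ℤ) := by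
    have hdeg :
        ((X + C ((n : ℝ) / 2)).natDegree : ℤ) - (1 : ℝ[X]).natDegree - (4 * n + 6) ≤ -2 := by
      rw [natDegree_X_add_C, natDegree_one]
      lia
    simpa only [eval_add, eval_X, eval_C, eval_one, div_one] using
      isBigO_div_mul_rrTerm (X + C ((n : ℝ) / 2)) 1 n hdeg
  have hs : Summable fun k : ℕ ↦ rrSummand n k :=
    summable_of_isBigO_nat (Real.summable_nat_pow_inv.2 one_lt_two)
      (by simpa [Function.comp_def, rrSummand, zpow_neg] using
        hO.comp_tendsto tendsto_natCast_atTop_atTop)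
  simpa using (summable_nat_add_iff 1).2 hs

lemma hasSum_rrSummand (n : ℕ) : HasSum (fun k : ℕ ↦ rrSummand n (k + 1)) (rr n) :=
  rr_eq_tsum_rrSummand n ▸ (summable_rrSummand n).hasSum

section Certificate

/-- The coefficient of `x ^ i` in `rrCertificatePoly n`. -/
def rrCertificateCoeff (n : ℝ) : ℕ → ℝ
  | 0 => n ^ 7 * (-329744 * n ^ 12 + 766432 * n ^ 11 + 2457820 * n ^ 10 - 3635060 * n ^ 9
      - 7874204 * n ^ 8 + 4996372 * n ^ 7 + 10719404 * n ^ 6 - 2809972 * n ^ 5 - 6787540 * n ^ 4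
      + 787676 * n ^ 3 + 2051816 * n ^ 2 - 105448 * n - 237552)
  | 1 => n ^ 6 * (-2802824 * n ^ 12 + 6267364 * n ^ 11 + 15077504 * n ^ 10 - 24282826 * n ^ 9
      - 32730888 * n ^ 8 + 31352202 * n ^ 7 + 29214632 * n ^ 6 - 20050666 * n ^ 5
      - 11641592 * n ^ 4 + 6297658 * n ^ 3 + 1899480 * n ^ 2 - 686196 * n - 118776)
  | 2 => n ^ 5 * (-11458604 * n ^ 12 + 27045692 * n ^ 11 + 36143709 * n ^ 10 - 82686160 * n ^ 9
      - 36686889 * n ^ 8 + 86463156 * n ^ 7 + 6117077 * n ^ 6 - 37631900 * n ^ 5 + 5565273 * n ^ 4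
      + 5511400 * n ^ 3 - 1361166 * n ^ 2 - 264012 * n + 118776)
  | 3 => n ^ 5 * (-30295230 * n ^ 11 + 81153229 * n ^ 10 + 22577116 * n ^ 9 - 165586775 * n ^ 8
      + 58451452 * n ^ 7 + 89721577 * n ^ 6 - 61004592 * n ^ 5 - 3661525 * n ^ 4
      + 11185934 * n ^ 3 - 1851370 * n ^ 2 - 822808 * n + 316736)
  | 4 => n ^ 5 * (-57870072 * n ^ 10 + 180466886 * n ^ 9 - 106882247 * n ^ 8 - 140085306 * n ^ 7
      + 190234475 * n ^ 6 - 52893542 * n ^ 5 - 24341629 * n ^ 4 + 15462896 * n ^ 3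
      - 240341 * n ^ 2 - 1664726 * n + 386022)
  | 5 => n ^ 5 * (-80746062 * n ^ 9 + 282996661 * n ^ 8 - 342950628 * n ^ 7 + 157518813 * n ^ 6
      + 11459452 * n ^ 5 - 34967763 * n ^ 4 + 7975436 * n ^ 3 + 2580499 * n ^ 2 - 1482054 * n
      + 188062)
  | 6 => n ^ 5 * (-66278544 * n ^ 8 + 199021670 * n ^ 7 - 196805785 * n ^ 6 + 55033598 * n ^ 5
      + 26715013 * n ^ 4 - 17783246 * n ^ 3 + 254290 * n ^ 2 + 2006256 * n - 475104)
  | 7 => 14220210 * n ^ 12 - 240770491 * n ^ 11 + 784380760 * n ^ 10 - 1133395177 * n ^ 9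
      + 802507658 * n ^ 8 - 118329700 * n ^ 7 - 245431244 * n ^ 6 + 157048628 * n ^ 5
      + 9283556 * n ^ 4 - 37009036 * n ^ 3 + 6398328 * n ^ 2 + 3065532 * n - 734976
  | 8 => 127446056 * n ^ 11 - 795334730 * n ^ 10 + 1881588249 * n ^ 9 - 2119843028 * n ^ 8
      + 858101599 * n ^ 7 + 452713380 * n ^ 6 - 529275894 * n ^ 5 + 43010350 * n ^ 4
      + 111667788 * n ^ 3 - 25863618 * n ^ 2 - 9396000 * n + 2153250
  | 9 => 185851962 * n ^ 10 - 943887187 * n ^ 9 + 1741788018 * n ^ 8 - 1184918958 * n ^ 7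
      - 186537883 * n ^ 6 + 585205848 * n ^ 5 - 116117876 * n ^ 4 - 124313973 * n ^ 3
      + 33355113 * n ^ 2 + 12105528 * n - 1751310
  | 10 => 141789920 * n ^ 9 - 527535814 * n ^ 8 + 550512961 * n ^ 7 - 16698660 * n ^ 6
      - 270976940 * n ^ 5 + 79273396 * n ^ 4 + 72495825 * n ^ 3 - 15336618 * n ^ 2 - 9932094 * n
      - 430650
  | 11 => 46493904 * n ^ 8 - 74144498 * n ^ 7 - 977009 * n ^ 6 + 62871300 * n ^ 5
      - 19841770 * n ^ 4 - 32595079 * n ^ 3 + 997440 * n ^ 2 + 6419817 * n + 1317789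
  | 12 => -1154104 * n ^ 7 + 6721876 * n ^ 6 - 13567344 * n ^ 5 + 6524084 * n ^ 4
      + 13510833 * n ^ 3 + 367836 * n ^ 2 - 3012723 * n - 723492
  | 13 => -577052 * n ^ 6 + 2783886 * n ^ 5 - 3422734 * n ^ 4 - 3954419 * n ^ 3 + 131544 * n ^ 2
      + 898275 * n + 200970
  | 14 => -247308 * n ^ 5 + 822132 * n ^ 4 + 693717 * n ^ 3 - 58464 * n ^ 2 - 162603 * n - 34452
  | 15 => -82436 * n ^ 4 - 55700 * n ^ 3 + 8439 * n ^ 2 + 14268 * n + 2871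
  | _ => 0

/-- The polynomial part of the certificate `rrCertificate`, in the variable `x = t + n`. -/
def rrCertificatePoly (n : ℝ) : ℝ[X] :=
  ∑ i ∈ Finset.range 16, C (rrCertificateCoeff n i) * X ^ i

lemma eval_rrCertificatePoly (n x : ℝ) :
    (rrCertificatePoly n).eval x = ∑ i ∈ Finset.range 16, rrCertificateCoeff n i * x ^ i := by
  simp [rrCertificatePoly, eval_finsetSum]

lemma natDegree_rrCertificatePoly_le (n : ℝ) : (rrCertificatePoly n).natDegree ≤ 15 :=
  natDegree_sum_le_of_forall_le _ _ fun i hi ↦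
    (natDegree_C_mul_X_pow_le _ i).trans (Nat.le_of_lt_succ (Finset.mem_range.1 hi))

lemma rrCertificatePoly_shift_sub (n x : ℝ) :
    (x - n) ^ 7 * (x + n - 3) * (rrCertificatePoly n).eval (x + 1) -
        (x - 2 * n + 1) * (x + 1) ^ 7 * (rrCertificatePoly n).eval x =
      (n + 1) ^ 9 * n ^ 5 * b0r (n - 1) * (2 * x - n + 1) *
          (x - 2 * n + 1) * (x - 2 * n) * (x - 2 * n - 1) *
          ((x + n - 3) * (x + n - 2) * (x + n - 1) * (x + n) * (x + n + 1) * (x + n + 2)) -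
        2 * n ^ 5 * b1r n * (2 * x - n) * (x - 2 * n + 1) * (x - 2 * n) *
          ((x + n - 3) * (x + n - 2) * (x + n - 1) * (x + n)) * (x + 1) ^ 7 -
        b2r n * (2 * x - n - 1) * (x - 2 * n + 1) * ((x + n - 3) * (x + n - 2)) *
          x ^ 7 * (x + 1) ^ 7 +
        2 * (n - 1) * (2 * n - 1) * b0r n * (2 * x - n - 2) *
          (x - 1) ^ 7 * x ^ 7 * (x + 1) ^ 7 := by
  simp only [eval_rrCertificatePoly, rrCertificateCoeff, Finset.sum_range_succ,
    Finset.sum_range_zero, b0r, b1r, b2r, a0r, a1r, a2r]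
  ring

/-- The certificate produced by Zeilberger's algorithm: the operator of the recurrence at index
`n = m + 2`, applied to `rrSummand`, is the forward difference of `rrCertificate m`. -/
def rrCertificate (m : ℕ) (t : ℝ) : ℝ :=
  (rrCertificatePoly (m + 2)).eval (t + (m + 2)) /
    (2 * (t + 2 * m + 1) * (t + 2 * m + 2) * (t + m + 2) ^ 7) * rrTerm (m + 1) t

lemma rrCertificate_one (m : ℕ) : rrCertificate m 1 = 0 := by
  simp [rrCertificate, rrTerm, descPochhammer_ne_zero_eval_zero]

lemma isBigO_rrCertificate (m : ℕ) : rrCertificate m =O[atTop] fun t ↦ t ^ (-1 : ℤ) := by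
  let P : ℝ[X] := (rrCertificatePoly (m + 2)).comp (X + C ((m : ℝ) + 2))
  let Q : ℝ[X] := C 2 * (X + C (2 * (m : ℝ) + 1)) * (X + C (2 * (m : ℝ) + 2)) *
    (X + C ((m : ℝ) + 2)) ^ 7
  have hcert : rrCertificate m = fun t ↦ P.eval t / Q.eval t * rrTerm (m + 1) t := by
    ext t
    simp only [rrCertificate, P, Q, eval_comp, eval_add, eval_mul, eval_pow, eval_X, eval_C,
      add_assoc]
  have hP : P.natDegree ≤ 15 := by
    rw [natDegree_comp, natDegree_X_add_C, mul_one]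
    exact natDegree_rrCertificatePoly_le _
  have hQ : Q.natDegree = 9 := by
    simp only [Q]
    compute_degree!
  rw [hcert]
  exact isBigO_div_mul_rrTerm P Q (m + 1) (by rw [hQ]; lia)

lemma tendsto_rrCertificate (m : ℕ) :
    Tendsto (fun k : ℕ ↦ rrCertificate m (k + 1)) atTop (𝓝 0) :=
  ((isBigO_rrCertificate m).trans_tendsto (tendsto_zpow_atTop_zero (by lia))).comp
    (tendsto_atTop_add_const_right _ 1 tendsto_natCast_atTop_atTop)

end Certificate

section Telescoping

/-- The common factor of the shifts of `rrTerm m` that occur in the recurrence and its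
certificate, whose cofactors are polynomials. -/
def rrCommonFactor (m : ℕ) (t : ℝ) : ℝ :=
  (m + 1) ^ 4 * rrTerm m t / ((t + m + 1) * (t + m + 2) * (t + m + 3)) ^ 7

variable (m : ℕ) {n t : ℝ}

lemma succ_pow_four_mul_rrTerm (ht : 0 < t) :
    (m + 1) ^ 4 * rrTerm m t =
      rrCommonFactor m t * ((t + m + 1) * (t + m + 2) * (t + m + 3)) ^ 7 :=
  (div_mul_cancel₀ _ (by positivity)).symm

lemma rrTerm_succ_eq_rrCommonFactor_mul (ht : 0 < t) :
    rrTerm (m + 1) t = rrCommonFactor m t * (t - (m + 1)) *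
      ((t + 2 * m + 1) * (t + 2 * m + 2)) * ((t + m + 2) * (t + m + 3)) ^ 7 := by
  apply mul_left_cancel₀ (a := (t + m + 1) ^ 7) (by positivity)
  rw [rrTerm_succ m ht, rrCommonFactor]
  field_simp

lemma rrTerm_add_two_eq_rrCommonFactor_mul (ht : 0 < t) :
    rrTerm (m + 2) t = rrCommonFactor m t * (m + 2) ^ 4 *
      ((t - (m + 1)) * (t - (m + 2))) *
      ((t + 2 * m + 1) * (t + 2 * m + 2) * (t + 2 * m + 3) * (t + 2 * m + 4)) *
      (t + m + 3) ^ 7 := by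
  have hstep : (t + m + 2) ^ 7 * rrTerm (m + 2) t = (m + 2) ^ 4 * (t - (m + 2)) *
      (t + 2 * m + 3) * (t + 2 * m + 4) * rrTerm (m + 1) t := by
    convert rrTerm_succ (m + 1) ht using 2 <;> push_cast <;> ring
  apply mul_left_cancel₀ (a := (t + m + 2) ^ 7) (by positivity)
  rw [hstep, rrTerm_succ_eq_rrCommonFactor_mul m ht]
  field_simp

lemma rrTerm_add_three_eq_rrCommonFactor_mul (ht : 0 < t) :
    rrTerm (m + 3) t = rrCommonFactor m t * ((m + 2) * (m + 3)) ^ 4 *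
      ((t - (m + 1)) * (t - (m + 2)) * (t - (m + 3))) *
      ((t + 2 * m + 1) * (t + 2 * m + 2) * (t + 2 * m + 3) * (t + 2 * m + 4) *
        (t + 2 * m + 5) * (t + 2 * m + 6)) := by
  have hstep : (t + m + 3) ^ 7 * rrTerm (m + 3) t = (m + 3) ^ 4 * (t - (m + 3)) *
      (t + 2 * m + 5) * (t + 2 * m + 6) * rrTerm (m + 2) t := by
    convert rrTerm_succ (m + 2) ht using 2 <;> push_cast <;> ring
  apply mul_left_cancel₀ (a := (t + m + 3) ^ 7) (by positivity)
  rw [hstep, rrTerm_add_two_eq_rrCommonFactor_mul m ht]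
  field_simp

lemma rrCertificate_eq_rrCommonFactor_mul (ht : 0 < t) :
    rrCertificate m t = rrCommonFactor m t / 2 * (t - (m + 1)) *
      (t + m + 3) ^ 7 * (rrCertificatePoly (m + 2)).eval (t + (m + 2)) := by
  rw [rrCertificate, rrTerm_succ_eq_rrCommonFactor_mul m ht]
  field_simp

lemma rrCertificate_add_one_eq_rrCommonFactor_mul (ht : 0 < t) :
    rrCertificate m (t + 1) = rrCommonFactor m t / 2 * t ^ 7 *
      (t + 2 * m + 1) * (rrCertificatePoly (m + 2)).eval (t + (m + 2) + 1) := by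
  have hterm : rrTerm (m + 1) (t + 1) = rrCommonFactor m t * t ^ 7 *
      ((t + 2 * m + 1) * (t + 2 * m + 2) * (t + 2 * m + 3)) * (t + m + 3) ^ 7 := by
    apply mul_left_cancel₀ (a := ((t + m + 1) * (t + m + 2)) ^ 7) (by positivity)
    rw [rrTerm_succ_add_one m ht, rrCommonFactor]
    field_simp
  have hden : 2 * (t + 1 + 2 * m + 1) * (t + 1 + 2 * m + 2) * (t + 1 + m + 2) ^ 7 =
      2 * (t + 2 * m + 2) * (t + 2 * m + 3) * (t + m + 3) ^ 7 := by
    ring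
  rw [rrCertificate, hterm, hden, add_right_comm t 1]
  field_simp

lemma rrCertificate_add_one_sub (hn : n = m + 2) (ht : 0 < t) :
    rrCertificate m (t + 1) - rrCertificate m t =
      n * (n + 1) ^ 5 * b0r (n - 1) * rrSummand (m + 3) t - 2 * n * b1r n * rrSummand (m + 2) t -
        b2r n * rrSummand (m + 1) t +
        2 * (n - 1) ^ 5 * (2 * n - 1) * b0r n * rrSummand m t := by
  have hm : (m : ℝ) = n - 2 := by rw [hn]; ring
  have hterm := succ_pow_four_mul_rrTerm m ht
  simp only [rrSummand, rrTerm_succ_eq_rrCommonFactor_mul m ht,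
    rrTerm_add_two_eq_rrCommonFactor_mul m ht, rrTerm_add_three_eq_rrCommonFactor_mul m ht,
    rrCertificate_eq_rrCommonFactor_mul m ht, rrCertificate_add_one_eq_rrCommonFactor_mul m ht]
  push_cast
  rw [← hn]
  rw [hm] at hterm ⊢
  linear_combination rrCommonFactor m t / 2 * rrCertificatePoly_shift_sub n (t + n) -
    (2 * (n - 1) * (2 * n - 1) * b0r n * (t + (n - 2) / 2)) * hterm

lemma hasSum_rrCertificate_sub (hn : n = m + 2) :
    HasSum (fun k : ℕ ↦ rrCertificate m (k + 1 + 1) - rrCertificate m (k + 1))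
      (n * (n + 1) ^ 5 * b0r (n - 1) * rr (m + 3) - 2 * n * b1r n * rr (m + 2) -
        b2r n * rr (m + 1) + 2 * (n - 1) ^ 5 * (2 * n - 1) * b0r n * rr m) := by
  simp only [fun k : ℕ ↦ rrCertificate_add_one_sub m hn k.cast_add_one_pos]
  exact ((((hasSum_rrSummand (m + 3)).mul_left _).sub
    ((hasSum_rrSummand (m + 2)).mul_left _)).sub ((hasSum_rrSummand (m + 1)).mul_left _)).add
    ((hasSum_rrSummand m).mul_left _)

end Telescoping

/-- The sequence `{r_n}` satisfies the difference equation (8) for every integer `n ≥ 2`. -/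
theorem stmt8 :
    ∀ n : ℕ, 2 ≤ n →
      (n : ℝ)*((n : ℝ) + 1)^5 * b0r ((n : ℝ) - 1) * rr (n+1) - 2*(n : ℝ)*b1r (n : ℝ) * rr n
        - b2r (n : ℝ) * rr (n-1)
        + 2*((n : ℝ) - 1)^5*(2*(n : ℝ) - 1)*b0r (n : ℝ) * rr (n-2) = 0 := by
  intro n hn
  obtain ⟨m, rfl⟩ := Nat.exists_eq_add_of_le' hn
  have hrec := hasSum_rrCertificate_sub m (Nat.cast_add m 2)
  have htel := hasSum_sub_of_tendsto (f := fun k : ℕ ↦ rrCertificate m (k + 1))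
    (by simpa using hrec.summable) (tendsto_rrCertificate m)
  simp only [Nat.cast_zero, zero_add, rrCertificate_one, sub_zero, Nat.cast_add_one] at htel
  exact hrec.unique htel
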